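/- Let n ≥ 2 be an integer and 0 < λ ≤ Λ real constants. Let Ω ⊆ ℝⁿ be an open set containing the closure of Q₂, let a : Ω → (real symmetric n×n matrices) satisfy λ·I ≤ a(x) ≤ Λ·I for every x ∈ Ω, and let v : Ω → ℝ be twice differentiable at every point of Ω (with Hessian matrix D²v(x)) and satisfy trace(a(x)·D²v(x)) ≤ 0 for every x ∈ Ω. If G⁻_{1/n}(v,Ω) ∩ Q_{1/(4√n)} ≠ ∅, then |G⁻₃₂(v,Ω) ∩ Q₁| ≥ (1−σ₁)·|Q₁|, where σ₁ := 1 − (λ/Λ)^{n−1} · (1/(4√n))^n. -/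

import Mathlib

open MeasureTheory Metric
open scoped InnerProductSpace ENNReal

noncomputable section

abbrev Euc (n : ℕ) := EuclideanSpace ℝ (Fin n)

/-- Loewner order -/
def matLE {n : ℕ} (A B : Matrix (Fin n) (Fin n) ℝ) : Prop := (B - A).PosSemidef

/-- Pucci minimal operator -/
def pucciInf {n : ℕ} (lam Lam : ℝ) (M : Matrix (Fin n) (Fin n) ℝ) : ℝ :=
  sInf {t : ℝ | ∃ A : Matrix (Fin n) (Fin n) ℝ,
    A.IsSymm ∧ matLE (lam • 1) A ∧ matLE A (Lam • 1) ∧ t = (A * M).trace}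

/-- Hessian matrix via second iterated Fréchet derivative -/
def hessianMatrix {n : ℕ} (φ : Euc n → ℝ) (x : Euc n) : Matrix (Fin n) (Fin n) ℝ :=
  Matrix.of fun i j =>
    iteratedFDeriv ℝ 2 φ x ![EuclideanSpace.single i 1, EuclideanSpace.single j 1]

/-- viscosity supersolution of M⁻(D²v) ≤ 0 -/
def ViscSupersol {n : ℕ} (lam Lam : ℝ) (Ω : Set (Euc n)) (v : Euc n → ℝ) : Prop :=
  ∀ x₀ ∈ Ω, ∀ φ : Euc n → ℝ,
    (∃ U : Set (Euc n), IsOpen U ∧ x₀ ∈ U ∧ ContDiffOn ℝ 2 φ U) →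
    IsLocalMinOn (fun x => v x - φ x) Ω x₀ →
    pucciInf lam Lam (hessianMatrix φ x₀) ≤ 0

def Gm {n : ℕ} (K : ℝ) (v : Euc n → ℝ) (Ω : Set (Euc n)) : Set (Euc n) :=
  {xb | xb ∈ Ω ∧ ∃ p : Euc n, ∀ x ∈ Ω, v x ≥ v xb + ⟪p, x - xb⟫_ℝ - K / 2 * ‖x - xb‖ ^ 2}

def Am {n : ℕ} (K : ℝ) (v : Euc n → ℝ) (Ω : Set (Euc n)) : Set (Euc n) := Ω \ Gm K v Ω

/-- open cube of side r centered at x -/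
def cube {n : ℕ} (r : ℝ) (x : Euc n) : Set (Euc n) := {y | ∀ i, |y i - x i| < r / 2}


/-- Hessian matrix extracted from a second-order Fréchet derivative. -/
def hessOfSecond {n : ℕ} (u'' : Euc n → (Euc n →L[ℝ] Euc n →L[ℝ] ℝ)) (x : Euc n) :
    Matrix (Fin n) (Fin n) ℝ :=
  Matrix.of fun i j => u'' x (EuclideanSpace.single i 1) (EuclideanSpace.single j 1)

/-!
The proof slides paraboloids from below. A concave paraboloid `y ↦ c - (K / 2) * ‖y - z‖ ^ 2`
touching `v` from below at `x` has the vertex `z = x + K⁻¹ • ∇v(x)`. If a paraboloid of small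
opening `κ` touches `v` at `x₀`, then every paraboloid of larger opening `μ` whose vertex lies in
a suitable ball, slid upwards until it meets the graph, touches `v` at a point close to `x₀`. So
the image under the vertex map of the contact points of opening `μ` near `x₀` covers a ball. The
Jacobian of this map is the determinant of `B = 1 + μ⁻¹ • D²v ≥ 0`, for which the equation gives
`tr (a B) ≤ tr a`; the arithmetic-geometric mean inequality turns this into
`det B ≤ (Λ / λ) ^ (n - 1)`, and the area formula concludes.
-/

section MatrixInequalities

open scoped MatrixOrder

variable {ι : Type*} [Fintype ι] [Nonempty ι]

lemma prod_le_sum_div_card_pow (z : ι → ℝ) (hz : ∀ i, 0 ≤ z i) :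
    ∏ i, z i ≤ ((∑ i, z i) / Fintype.card ι) ^ Fintype.card ι := by
  have hmean : (∏ i, z i) ^ (Fintype.card ι : ℝ)⁻¹ ≤ (∑ i, z i) / Fintype.card ι := by
    simpa using Real.geom_mean_le_arith_mean Finset.univ (fun _ ↦ 1) z (by simp)
      (by simp [Fintype.card_pos]) (fun i _ ↦ hz i)
  have hprod : 0 ≤ ∏ i, z i := Finset.prod_nonneg fun i _ ↦ hz i
  calc ∏ i, z i = ((∏ i, z i) ^ (Fintype.card ι : ℝ)⁻¹) ^ Fintype.card ι :=
        (Real.rpow_inv_natCast_pow hprod Fintype.card_ne_zero).symm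
    _ ≤ _ := by gcongr

lemma sum_div_card_pow_le_div_pow_mul_prod {lam Lam : ℝ} (hlam : 0 < lam) {m : ι → ℝ}
    (hm : ∀ i, m i ∈ Set.Icc lam Lam) :
    ((∑ i, m i) / Fintype.card ι) ^ Fintype.card ι ≤
      (Lam / lam) ^ (Fintype.card ι - 1) * ∏ i, m i := by
  classical
  obtain ⟨k, hk⟩ := Finite.exists_max m
  have hpos (i : ι) : 0 < m i := hlam.trans_le (hm i).1
  have hmean : (∑ i, m i) / Fintype.card ι ≤ m k := by
    rw [div_le_iff₀' (by exact_mod_cast Fintype.card_pos)]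
    simpa using Finset.sum_le_card_nsmul Finset.univ m (m k) fun i _ ↦ hk i
  have hprod : lam ^ (Fintype.card ι - 1) * m k ≤ ∏ i, m i := by
    rw [← Finset.prod_erase_mul _ _ (Finset.mem_univ k)]
    gcongr
    · exact (hpos k).le
    · simpa using Finset.prod_le_prod (s := Finset.univ.erase k) (fun _ _ ↦ hlam.le)
        fun i _ ↦ (hm i).1
  calc ((∑ i, m i) / Fintype.card ι) ^ Fintype.card ι
      ≤ m k ^ Fintype.card ι := by
        gcongr
        exact div_nonneg (Finset.sum_nonneg fun i _ ↦ (hpos i).le) (Nat.cast_nonneg _)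
    _ = m k ^ (Fintype.card ι - 1) * m k := (pow_sub_one_mul Fintype.card_ne_zero _).symm
    _ ≤ Lam ^ (Fintype.card ι - 1) * m k := by
        gcongr
        exacts [(hpos k).le, (hpos k).le, (hm k).2]
    _ = (Lam / lam) ^ (Fintype.card ι - 1) * (lam ^ (Fintype.card ι - 1) * m k) := by
        rw [div_pow]
        field_simp
    _ ≤ (Lam / lam) ^ (Fintype.card ι - 1) * ∏ i, m i := by
        have : 0 < Lam := (hpos k).trans_le (hm k).2
        gcongr

lemma exists_posSemidef_det_eq_det_mul_det_and_trace_eq_trace_mul {ι : Type*} [Fintype ι]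
    [DecidableEq ι] {A B : Matrix ι ι ℝ} (hA : A.PosSemidef) (hB : B.PosSemidef) :
    ∃ M : Matrix ι ι ℝ, M.PosSemidef ∧ M.det = A.det * B.det ∧ M.trace = (A * B).trace := by
  obtain ⟨C, rfl⟩ := CStarAlgebra.nonneg_iff_eq_star_mul_self.mp hA.nonneg
  rw [Matrix.star_eq_conjTranspose]
  refine ⟨C * B * C.conjTranspose, hB.mul_mul_conjTranspose_same C, ?_, ?_⟩
  · simp only [Matrix.det_mul]
    ring
  · rw [Matrix.trace_mul_comm, Matrix.mul_assoc]

variable [DecidableEq ι]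

lemma det_le_trace_div_card_pow {M : Matrix ι ι ℝ} (hM : M.PosSemidef) :
    M.det ≤ (M.trace / Fintype.card ι) ^ Fintype.card ι := by
  rw [hM.isHermitian.det_eq_prod_eigenvalues, hM.isHermitian.trace_eq_sum_eigenvalues]
  exact prod_le_sum_div_card_pow _ hM.eigenvalues_nonneg

lemma trace_div_card_pow_le_div_pow_mul_det {lam Lam : ℝ} (hlam : 0 < lam) {A : Matrix ι ι ℝ}
    (hA : A.IsHermitian) (hlamA : lam • 1 ≤ A) (hALam : A ≤ Lam • 1) :
    (A.trace / Fintype.card ι) ^ Fintype.card ι ≤ (Lam / lam) ^ (Fintype.card ι - 1) * A.det := by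
  rw [← Algebra.algebraMap_eq_smul_one] at hlamA hALam
  rw [hA.det_eq_prod_eigenvalues, hA.trace_eq_sum_eigenvalues]
  refine sum_div_card_pow_le_div_pow_mul_prod hlam fun i ↦ ?_
  have hspec := hA.eigenvalues_mem_spectrum_real i
  exact ⟨(algebraMap_le_iff_le_spectrum hA.isSelfAdjoint).1 hlamA _ hspec,
    (le_algebraMap_iff_spectrum_le hA.isSelfAdjoint).1 hALam _ hspec⟩

lemma det_le_div_pow_of_trace_mul_le_trace {lam Lam : ℝ} (hlam : 0 < lam) {A B : Matrix ι ι ℝ}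
    (hlamA : lam • 1 ≤ A) (hALam : A ≤ Lam • 1) (hB : B.PosSemidef)
    (htrace : (A * B).trace ≤ A.trace) : B.det ≤ (Lam / lam) ^ (Fintype.card ι - 1) := by
  have hA : A.PosDef := by
    simpa using (Matrix.PosDef.one.smul hlam).add_posSemidef (Matrix.le_iff.mp hlamA)
  obtain ⟨M, hM, hdet, htr⟩ :=
    exists_posSemidef_det_eq_det_mul_det_and_trace_eq_trace_mul hA.posSemidef hB
  refine le_of_mul_le_mul_left ?_ hA.det_pos
  calc A.det * B.det = M.det := hdet.symm
    _ ≤ (M.trace / Fintype.card ι) ^ Fintype.card ι := det_le_trace_div_card_pow hM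
    _ ≤ (A.trace / Fintype.card ι) ^ Fintype.card ι := by
        have := hM.trace_nonneg
        gcongr
        exact htr.trans_le htrace
    _ ≤ (Lam / lam) ^ (Fintype.card ι - 1) * A.det :=
        trace_div_card_pow_le_div_pow_mul_det hlam hA.isHermitian hlamA hALam
    _ = A.det * (Lam / lam) ^ (Fintype.card ι - 1) := mul_comm _ _

end MatrixInequalities

section SecondOrderCondition

open scoped Topology

lemma second_deriv_nonneg_of_isLocalMin {f f' : ℝ → ℝ} {c t : ℝ}
    (hf : ∀ᶠ s in 𝓝 t, HasDerivAt f (f' s) s) (hf' : HasDerivAt f' c t) (hmin : IsLocalMin f t) :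
    0 ≤ c := by
  by_contra! hc
  have hderiv2 : deriv (deriv f) t = c := by
    have heq : deriv f =ᶠ[𝓝 t] f' := hf.mono fun s hs ↦ hs.deriv
    rw [heq.deriv_eq, hf'.deriv]
  have hmax : IsLocalMax f t :=
    isLocalMax_of_deriv_deriv_neg (hderiv2 ▸ hc) hmin.deriv_eq_zero hf.self_of_nhds.continuousAt
  have hconst : f =ᶠ[𝓝 t] fun _ ↦ f t := by
    filter_upwards [hmin, hmax] with s hle hge using le_antisymm hge hle
  have hzero : deriv (deriv f) t = 0 := by simp [hconst.deriv.deriv_eq]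
  exact hc.ne (hderiv2.symm.trans hzero)

lemma second_fderiv_nonneg_of_isLocalMin {F : Type*} [NormedAddCommGroup F] [NormedSpace ℝ F]
    {f : F → ℝ} {f' : F → StrongDual ℝ F} {B : F →L[ℝ] StrongDual ℝ F} {x : F}
    (hf : ∀ᶠ y in 𝓝 x, HasFDerivAt f (f' y) y) (hf' : HasFDerivAt f' B x) (hmin : IsLocalMin f x)
    (u : F) : 0 ≤ B u u := by
  have hline (t : ℝ) : HasDerivAt (fun s : ℝ ↦ x + s • u) u t := by
    simpa using ((hasDerivAt_id t).smul_const u).const_add x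
  have hx : x + (0 : ℝ) • u = x := by simp
  have htendsto : Filter.Tendsto (fun s : ℝ ↦ x + s • u) (𝓝 0) (𝓝 x) := by
    simpa only [hx] using (hline 0).continuousAt.tendsto
  refine second_deriv_nonneg_of_isLocalMin (f := fun s : ℝ ↦ f (x + s • u))
    (f' := fun s ↦ f' (x + s • u) u) (t := 0) ?_ ?_ ?_
  · filter_upwards [htendsto.eventually hf] with s hs using hs.comp_hasDerivAt s (hline s)
  · have hcomp := (hx.symm ▸ hf').comp_hasDerivAt (0 : ℝ) (hline 0)
    simpa using hcomp.clm_apply (hasDerivAt_const 0 u)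
  · filter_upwards [htendsto.eventually hmin] with s hs
    simpa only [hx] using hs

end SecondOrderCondition

section SlidingParaboloids

open scoped Topology

variable {E : Type*} [NormedAddCommGroup E] [InnerProductSpace ℝ E]

lemma norm_sub_sq_eq_sub_two_mul_inner_add (x y z : E) :
    ‖y - z‖ ^ 2 = ‖y - x‖ ^ 2 - 2 * ⟪z - x, y - x⟫_ℝ + ‖x - z‖ ^ 2 := by
  rw [← sub_sub_sub_cancel_right y z x, norm_sub_sq_real, real_inner_comm, norm_sub_rev z x]

/-- On `Ω`, the function `v` lies above the concave paraboloid of opening `K` that passes through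
`(x, v x)` with slope `p` there. -/
def IsTouchedBelow (K : ℝ) (v : E → ℝ) (Ω : Set E) (x p : E) : Prop :=
  ∀ y ∈ Ω, v x + ⟪p, y - x⟫_ℝ - K / 2 * ‖y - x‖ ^ 2 ≤ v y

/-- The vertex of the paraboloid of opening `K` tangent at `x` to a function with derivative `v'`.
The gradient is written through the Riesz isomorphism, so that `v'` enters as a Fréchet
derivative. -/
def vertexMap [CompleteSpace E] (K : ℝ) (v' : E → StrongDual ℝ E) (x : E) : E :=
  x + K⁻¹ • (InnerProductSpace.toDual ℝ E).symm (v' x)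

/-- The derivative of `vertexMap` at a point where the second derivative is `B`. -/
def vertexMapDeriv [CompleteSpace E] (K : ℝ) (B : E →L[ℝ] StrongDual ℝ E) : E →L[ℝ] E :=
  ContinuousLinearMap.id ℝ E + K⁻¹ • InnerProductSpace.continuousLinearMapOfBilin (𝕜 := ℝ) B

lemma hasFDerivAt_vertexMap [CompleteSpace E] (K : ℝ) {v' : E → StrongDual ℝ E}
    {B : E →L[ℝ] StrongDual ℝ E} {x : E} (h : HasFDerivAt v' B x) :
    HasFDerivAt (vertexMap K v') (vertexMapDeriv K B) x :=
  let riesz : StrongDual ℝ E →L[ℝ] E :=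
    (InnerProductSpace.toDual ℝ E).symm.toContinuousLinearEquiv.toContinuousLinearMap
  (hasFDerivAt_id x).add ((riesz.hasFDerivAt.comp x h).const_smul K⁻¹)

lemma inner_vertexMapDeriv_left [CompleteSpace E] (K : ℝ) (B : E →L[ℝ] StrongDual ℝ E) (u w : E) :
    ⟪vertexMapDeriv K B u, w⟫_ℝ = ⟪u, w⟫_ℝ + K⁻¹ * B u w := by
  simp [vertexMapDeriv, inner_add_left, inner_smul_left]

lemma isPositive_vertexMapDeriv [CompleteSpace E] {K : ℝ} (hK : 0 < K)
    {B : E →L[ℝ] StrongDual ℝ E} (hsymm : ∀ u w, B u w = B w u)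
    (hB : ∀ u, -(K * ‖u‖ ^ 2) ≤ B u u) : (vertexMapDeriv K B : E →ₗ[ℝ] E).IsPositive := by
  refine ⟨fun u w ↦ ?_, fun u ↦ ?_⟩
  · rw [ContinuousLinearMap.coe_coe, inner_vertexMapDeriv_left,
      ← real_inner_comm u (vertexMapDeriv K B w), inner_vertexMapDeriv_left, real_inner_comm,
      hsymm u w]
  · have : 0 ≤ K⁻¹ * (K * ‖u‖ ^ 2 + B u u) := mul_nonneg (by positivity) (by linarith [hB u])
    rw [mul_add, inv_mul_cancel_left₀ hK.ne'] at this
    simpa [inner_vertexMapDeriv_left] using this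

lemma toMatrix_vertexMapDeriv [CompleteSpace E] {ι : Type*} [Fintype ι] [DecidableEq ι]
    (b : OrthonormalBasis ι ℝ E) (K : ℝ) (B : E →L[ℝ] StrongDual ℝ E) :
    LinearMap.toMatrix b.toBasis b.toBasis (vertexMapDeriv K B) =
      1 + K⁻¹ • Matrix.of fun i j ↦ B (b j) (b i) := by
  ext i j
  calc _ = ⟪b i, vertexMapDeriv K B (b j)⟫_ℝ := by
        simp [LinearMap.toMatrix_apply, OrthonormalBasis.repr_apply_apply]
    _ = ⟪b i, b j⟫_ℝ + K⁻¹ * B (b j) (b i) := by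
        rw [real_inner_comm, inner_vertexMapDeriv_left, real_inner_comm]
    _ = _ := by simp [b.inner_eq_ite, Matrix.one_apply]

open scoped MatrixOrder in
lemma abs_det_vertexMapDeriv_le [CompleteSpace E] {ι : Type*} [Fintype ι] [Nonempty ι]
    [DecidableEq ι] (b : OrthonormalBasis ι ℝ E) {K lam Lam : ℝ} (hK : 0 < K) (hlam : 0 < lam)
    {A : Matrix ι ι ℝ} (hlamA : lam • 1 ≤ A) (hALam : A ≤ Lam • 1)
    {B : E →L[ℝ] StrongDual ℝ E} (hsymm : ∀ u w, B u w = B w u)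
    (hB : ∀ u, -(K * ‖u‖ ^ 2) ≤ B u u)
    (htrace : (A * Matrix.of fun i j ↦ B (b i) (b j)).trace ≤ 0) :
    |(vertexMapDeriv K B).det| ≤ (Lam / lam) ^ (Fintype.card ι - 1) := by
  set M := LinearMap.toMatrix b.toBasis b.toBasis (vertexMapDeriv K B) with hM
  have hpos : M.PosSemidef :=
    (LinearMap.posSemidef_toMatrix_iff b).2 (isPositive_vertexMapDeriv hK hsymm hB)
  have htraceM : (A * M).trace ≤ A.trace := by
    simp only [hM, toMatrix_vertexMapDeriv, fun i j ↦ hsymm (b j) (b i), mul_add, mul_one,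
      Matrix.mul_smul, Matrix.trace_add, Matrix.trace_smul, smul_eq_mul]
    linarith [mul_nonpos_of_nonneg_of_nonpos (inv_nonneg.2 hK.le) htrace]
  rw [ContinuousLinearMap.det, ← LinearMap.det_toMatrix b.toBasis, abs_of_nonneg hpos.det_nonneg]
  exact det_le_div_pow_of_trace_mul_le_trace hlam hlamA hALam hpos htraceM

lemma hasFDerivAt_sub_inner_add_mul_norm_sq {v : E → ℝ} {L : StrongDual ℝ E} {y : E}
    (hv : HasFDerivAt v L y) (p x : E) (K : ℝ) :
    HasFDerivAt (fun y ↦ v y - ⟪p, y⟫_ℝ + K / 2 * ‖y - x‖ ^ 2)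
      (L - innerSL ℝ p + K • innerSL ℝ (y - x)) y := by
  have hsq : HasFDerivAt (fun y ↦ K / 2 * ‖y - x‖ ^ 2) (K • innerSL ℝ (y - x)) y := by
    refine (((hasFDerivAt_id y).sub_const x).norm_sq.const_mul (K / 2)).congr_fderiv ?_
    rw [ContinuousLinearMap.comp_id, ← Nat.cast_smul_eq_nsmul ℝ, smul_smul, Nat.cast_ofNat,
      div_mul_cancel₀ _ two_ne_zero]
    rfl
  exact (hv.sub (innerSL ℝ p).hasFDerivAt).add hsq

namespace IsTouchedBelow

variable {v : E → ℝ} {v' : E → StrongDual ℝ E} {B : E →L[ℝ] StrongDual ℝ E} {Ω : Set E}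
  {x x₀ p y z : E} {K κ μ ρ : ℝ}

lemma isLocalMin (h : IsTouchedBelow K v Ω x p) (hΩ : Ω ∈ 𝓝 x) :
    IsLocalMin (fun y ↦ v y - ⟪p, y⟫_ℝ + K / 2 * ‖y - x‖ ^ 2) x := by
  filter_upwards [hΩ] with y hy
  have := h y hy
  rw [inner_sub_right] at this
  simp only [sub_self, norm_zero]
  linarith

lemma fderiv_eq (h : IsTouchedBelow K v Ω x p) (hΩ : Ω ∈ 𝓝 x) (hv : HasFDerivAt v (v' x) x) :
    v' x = innerSL ℝ p := by
  simpa [sub_eq_zero] using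
    (h.isLocalMin hΩ).hasFDerivAt_eq_zero (hasFDerivAt_sub_inner_add_mul_norm_sq hv p x K)

lemma neg_mul_norm_sq_le_second_fderiv (h : IsTouchedBelow K v Ω x p) (hΩ : Ω ∈ 𝓝 x)
    (hv : ∀ᶠ y in 𝓝 x, HasFDerivAt v (v' y) y) (hv' : HasFDerivAt v' B x) (u : E) :
    -(K * ‖u‖ ^ 2) ≤ B u u := by
  let riesz : E →L[ℝ] StrongDual ℝ E := innerSL ℝ
  have hsecond : HasFDerivAt (fun y ↦ v' y - innerSL ℝ p + K • innerSL ℝ (y - x))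
      (B + K • riesz) x :=
    (hv'.sub_const _).add
      ((riesz.hasFDerivAt.comp x ((hasFDerivAt_id x).sub_const x)).const_smul K)
  have hnonneg : 0 ≤ B u u + K * ⟪u, u⟫_ℝ :=
    second_fderiv_nonneg_of_isLocalMin
      (hv.mono fun y hy ↦ hasFDerivAt_sub_inner_add_mul_norm_sq hy p x K)
      hsecond (h.isLocalMin hΩ) u
  rw [real_inner_self_eq_norm_sq] at hnonneg
  linarith

lemma vertexMap_eq [CompleteSpace E] (h : IsTouchedBelow K v Ω x p) (hΩ : Ω ∈ 𝓝 x)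
    (hv : HasFDerivAt v (v' x) x) : vertexMap K v' x = x + K⁻¹ • p := by
  rw [vertexMap, h.fderiv_eq hΩ hv]
  congr 2
  exact (InnerProductSpace.toDual ℝ E).symm_apply_apply p

lemma of_isMinOn (h : IsMinOn (fun y ↦ v y + K / 2 * ‖y - z‖ ^ 2) Ω x) :
    IsTouchedBelow K v Ω x (K • (z - x)) := by
  intro y hy
  have hmin : v x + K / 2 * ‖x - z‖ ^ 2 ≤ v y + K / 2 * ‖y - z‖ ^ 2 := h hy
  rw [norm_sub_sq_eq_sub_two_mul_inner_add x y z] at hmin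
  rw [real_inner_smul_left]
  linarith

/-- Subtracting the two paraboloids leaves `(μ - κ) / 2 * ‖y - x₀‖ ^ 2` plus a linear term of slope
`μ` times the distance of `z` from the center of the ball. -/
lemma add_norm_sub_sq_lt (h : IsTouchedBelow κ v Ω x₀ p) (hμ : 0 < μ) (hκμ : κ < μ)
    (hz : z ∈ ball (x₀ + μ⁻¹ • p) ((1 - κ / μ) * (ρ / 2))) (hy : y ∈ Ω \ ball x₀ ρ) :
    v x₀ + μ / 2 * ‖x₀ - z‖ ^ 2 < v y + μ / 2 * ‖y - z‖ ^ 2 := by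
  set q := p - μ • (z - x₀) with hq
  have hslope : ‖q‖ < (μ - κ) * (ρ / 2) := by
    have hq_eq : q = μ • (x₀ + μ⁻¹ • p - z) := by
      rw [hq, smul_sub, smul_sub, smul_add, smul_inv_smul₀ hμ.ne']
      abel
    rw [mem_ball_comm, mem_ball, dist_eq_norm] at hz
    calc ‖q‖ = μ * ‖x₀ + μ⁻¹ • p - z‖ := by rw [hq_eq, norm_smul_of_nonneg hμ.le]
      _ < μ * ((1 - κ / μ) * (ρ / 2)) := by gcongr
      _ = (μ - κ) * (ρ / 2) := by field_simp
  have hρy : ρ ≤ ‖y - x₀‖ := by simpa [dist_eq_norm] using hy.2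
  have hgap : 0 < (μ - κ) / 2 * ‖y - x₀‖ ^ 2 + ⟪q, y - x₀⟫_ℝ := by
    have hρ : 0 < ρ := by nlinarith [norm_nonneg q]
    have hlin : -(‖q‖ * ‖y - x₀‖) ≤ ⟪q, y - x₀⟫_ℝ := (abs_le.1 (abs_real_inner_le_norm _ _)).1
    nlinarith [mul_pos (sub_pos.2 hκμ) (hρ.trans_le hρy)]
  have htouch := h y hy.1
  rw [hq, inner_sub_left, real_inner_smul_left] at hgap
  rw [norm_sub_sq_eq_sub_two_mul_inner_add x₀ y z]
  linarith

lemma exists_mem_ball_of_vertex_mem_ball [ProperSpace E] (h : IsTouchedBelow κ v Ω x₀ p)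
    (hμ : 0 < μ) (hκμ : κ < μ) (hρ : closedBall x₀ ρ ⊆ Ω)
    (hv : ContinuousOn v (closedBall x₀ ρ))
    (hz : z ∈ ball (x₀ + μ⁻¹ • p) ((1 - κ / μ) * (ρ / 2))) :
    ∃ x ∈ ball x₀ ρ, IsTouchedBelow μ v Ω x (μ • (z - x)) := by
  have hlt {y : E} := h.add_norm_sub_sq_lt (y := y) hμ hκμ hz
  have hρ0 : 0 ≤ ρ := by
    have hratio : 0 < 1 - κ / μ := sub_pos.2 ((div_lt_one hμ).2 hκμ)
    linarith [(pos_iff_pos_of_mul_pos (pos_of_mem_ball hz)).1 hratio]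
  have hx₀ : x₀ ∈ closedBall x₀ ρ := mem_closedBall_self hρ0
  obtain ⟨x, hx, hmin⟩ := (isCompact_closedBall x₀ ρ).exists_isMinOn_mem_subset
    (f := fun y ↦ v y + μ / 2 * ‖y - z‖ ^ 2) (by fun_prop) hx₀
    fun y hy ↦ hlt ⟨hρ hy.1, hy.2⟩
  refine ⟨x, hx, of_isMinOn fun y hy ↦ ?_⟩
  by_cases hyball : y ∈ ball x₀ ρ
  · exact hmin (ball_subset_closedBall hyball)
  · exact (hmin hx₀).trans (hlt ⟨hy, hyball⟩).le

end IsTouchedBelow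

end SlidingParaboloids

section Cubes

variable {n : ℕ}

lemma volume_cube (r : ℝ) (x : Euc n) : volume (cube r x) = ENNReal.ofReal r ^ n := by
  have hpre : cube r x = WithLp.ofLp ⁻¹'
      Set.pi Set.univ fun i ↦ Set.Ioo (x i - r / 2) (x i + r / 2) := by
    ext y
    simp [cube, abs_sub_lt_iff, sub_lt_iff_lt_add, add_comm, and_comm]
  rw [hpre, (PiLp.volume_preserving_ofLp (Fin n)).measure_preimage
    (MeasurableSet.univ_pi fun _ ↦ measurableSet_Ioo).nullMeasurableSet, Real.volume_pi_Ioo]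
  simp

lemma ball_subset_cube (x : Euc n) (r : ℝ) : ball x (r / 2) ⊆ cube r x := fun y hy i ↦
  (PiLp.norm_apply_le (y - x) i).trans_lt (mem_ball_iff_norm.1 hy)

lemma cube_subset_closedBall [NeZero n] {r s : ℝ} (h : √n * (s / 2) ≤ r) (x : Euc n) :
    cube s x ⊆ closedBall x r := by
  intro y hy
  rw [mem_closedBall_iff_norm]
  calc ‖y - x‖ ≤ √n * ⨆ i, ‖(y - x) i‖ := by
        simpa [EuclideanSpace.inner_single_left] using
          (EuclideanSpace.basisFun (Fin n) ℝ).norm_le_card_mul_iSup_norm_inner (y - x)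
    _ ≤ √n * (s / 2) := by
        gcongr
        exact ciSup_le fun i ↦ (hy i).le
    _ ≤ r := h

end Cubes

section MeasureEstimate

variable {n : ℕ} {Ω : Set (Euc n)} {v : Euc n → ℝ} {v' : Euc n → StrongDual ℝ (Euc n)}
  {v'' : Euc n → Euc n →L[ℝ] StrongDual ℝ (Euc n)} {a : Euc n → Matrix (Fin n) (Fin n) ℝ}
  {K κ μ ρ lam Lam : ℝ} {x₀ p : Euc n}

lemma mem_Gm_iff_exists_isTouchedBelow {x : Euc n} :
    x ∈ Gm K v Ω ↔ x ∈ Ω ∧ ∃ p, IsTouchedBelow K v Ω x p :=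
  Iff.rfl

lemma mem_Gm_iff_le_fderiv (hΩ : IsOpen Ω) (hv : ∀ x ∈ Ω, HasFDerivAt v (v' x) x) {x : Euc n}
    (hx : x ∈ Ω) :
    x ∈ Gm K v Ω ↔ ∀ y ∈ Ω, v x + v' x (y - x) - K / 2 * ‖y - x‖ ^ 2 ≤ v y := by
  constructor
  · intro h
    obtain ⟨-, p, hp⟩ := mem_Gm_iff_exists_isTouchedBelow.1 h
    simpa [IsTouchedBelow, hp.fderiv_eq (hΩ.mem_nhds hx) (hv x hx)] using hp
  · intro h
    exact ⟨hx, (InnerProductSpace.toDual ℝ (Euc n)).symm (v' x), by simpa using h⟩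

lemma isOpen_Am (hΩ : IsOpen Ω) (hv : ∀ x ∈ Ω, HasFDerivAt v (v' x) x) (hv' : ContinuousOn v' Ω)
    (K : ℝ) : IsOpen (Am K v Ω) := by
  have hAm : Am K v Ω = ⋃ y ∈ Ω, Ω ∩
      (fun x ↦ v x + v' x (y - x) - K / 2 * ‖y - x‖ ^ 2) ⁻¹' Set.Ioi (v y) := by
    ext x
    by_cases hx : x ∈ Ω <;> simp [Am, hx, mem_Gm_iff_le_fderiv hΩ hv, lt_sub_iff_add_lt]
  have hcont : ContinuousOn v Ω := fun x hx ↦ (hv x hx).continuousAt.continuousWithinAt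
  rw [hAm]
  refine isOpen_biUnion fun y _ ↦ ContinuousOn.isOpen_inter_preimage ?_ hΩ isOpen_Ioi
  exact (hcont.add (hv'.clm_apply (by fun_prop))).sub (by fun_prop)

lemma measurableSet_Gm (hΩ : IsOpen Ω) (hv : ∀ x ∈ Ω, HasFDerivAt v (v' x) x)
    (hv' : ContinuousOn v' Ω) (K : ℝ) : MeasurableSet (Gm K v Ω) := by
  have hGm : Gm K v Ω = Ω \ Am K v Ω := by
    rw [Am, Set.sdiff_sdiff_cancel_left fun _ hx ↦ hx.1]
  exact hGm ▸ hΩ.measurableSet.diff (isOpen_Am hΩ hv hv' K).measurableSet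

lemma ball_subset_image_vertexMap (hΩ : IsOpen Ω) (hv : ∀ x ∈ Ω, HasFDerivAt v (v' x) x)
    (hμ : 0 < μ) (hκμ : κ < μ) (hp : IsTouchedBelow κ v Ω x₀ p) (hρ : closedBall x₀ ρ ⊆ Ω) :
    ball (x₀ + μ⁻¹ • p) ((1 - κ / μ) * (ρ / 2)) ⊆
      vertexMap μ v' '' (Gm μ v Ω ∩ ball x₀ ρ) := by
  intro z hz
  have hcont : ContinuousOn v (closedBall x₀ ρ) := fun x hx ↦
    (hv x (hρ hx)).continuousAt.continuousWithinAt
  obtain ⟨x, hx, htouch⟩ := hp.exists_mem_ball_of_vertex_mem_ball hμ hκμ hρ hcont hz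
  have hxΩ : x ∈ Ω := hρ (ball_subset_closedBall hx)
  refine ⟨x, ⟨⟨hxΩ, _, htouch⟩, hx⟩, ?_⟩
  rw [htouch.vertexMap_eq (hΩ.mem_nhds hxΩ) (hv x hxΩ), inv_smul_smul₀ hμ.ne', add_sub_cancel]

lemma abs_det_vertexMapDeriv_le_of_mem_Gm [NeZero n] (hΩ : IsOpen Ω)
    (hv : ∀ x ∈ Ω, HasFDerivAt v (v' x) x) {x : Euc n} (hv' : HasFDerivAt v' (v'' x) x)
    (hlam : 0 < lam) {A : Matrix (Fin n) (Fin n) ℝ} (hlamA : matLE (lam • 1) A)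
    (hALam : matLE A (Lam • 1)) (hsuper : (A * hessOfSecond v'' x).trace ≤ 0) (hK : 0 < K)
    (hx : x ∈ Gm K v Ω) : |(vertexMapDeriv K (v'' x)).det| ≤ (Lam / lam) ^ (n - 1) := by
  obtain ⟨hxΩ, p, hp⟩ := mem_Gm_iff_exists_isTouchedBelow.1 hx
  have hv_near := (hΩ.eventually_mem hxΩ).mono hv
  have hsymm := second_derivative_symmetric_of_eventually hv_near hv'
  have hB := hp.neg_mul_norm_sq_le_second_fderiv (hΩ.mem_nhds hxΩ) hv_near hv'
  simpa using abs_det_vertexMapDeriv_le (EuclideanSpace.basisFun (Fin n) ℝ) hK hlam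
    hlamA hALam hsymm hB (by simpa [hessOfSecond] using hsuper)

lemma volume_image_vertexMap_le [NeZero n] (hΩ : IsOpen Ω)
    (hv : ∀ x ∈ Ω, HasFDerivAt v (v' x) x) (hv' : ∀ x ∈ Ω, HasFDerivAt v' (v'' x) x)
    (hlam : 0 < lam) (ha : ∀ x ∈ Ω, matLE (lam • 1) (a x) ∧ matLE (a x) (Lam • 1))
    (hsuper : ∀ x ∈ Ω, (a x * hessOfSecond v'' x).trace ≤ 0) (hK : 0 < K) {T : Set (Euc n)}
    (hT : MeasurableSet T) (hTG : T ⊆ Gm K v Ω) :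
    volume (vertexMap K v' '' T) ≤ ENNReal.ofReal ((Lam / lam) ^ (n - 1)) * volume T := by
  calc volume (vertexMap K v' '' T)
      ≤ ∫⁻ x in T, ENNReal.ofReal |(vertexMapDeriv K (v'' x)).det| :=
        addHaar_image_le_lintegral_abs_det_fderiv volume hT fun x hx ↦
          (hasFDerivAt_vertexMap K (hv' x (hTG hx).1)).hasFDerivWithinAt
    _ ≤ ∫⁻ _ in T, ENNReal.ofReal ((Lam / lam) ^ (n - 1)) :=
        setLIntegral_mono' hT fun x hx ↦ ENNReal.ofReal_le_ofReal <|
          have hxΩ : x ∈ Ω := (hTG hx).1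
          abs_det_vertexMapDeriv_le_of_mem_Gm hΩ hv (hv' x hxΩ) hlam (ha x hxΩ).1 (ha x hxΩ).2
            (hsuper x hxΩ) hK (hTG hx)
    _ = ENNReal.ofReal ((Lam / lam) ^ (n - 1)) * volume T := setLIntegral_const _ _

theorem mul_volume_ball_le_volume_Gm_inter_ball [NeZero n] (hΩ : IsOpen Ω)
    (hv : ∀ x ∈ Ω, HasFDerivAt v (v' x) x) (hv' : ∀ x ∈ Ω, HasFDerivAt v' (v'' x) x)
    (hlam : 0 < lam) (hLam : 0 < Lam)
    (ha : ∀ x ∈ Ω, matLE (lam • 1) (a x) ∧ matLE (a x) (Lam • 1))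
    (hsuper : ∀ x ∈ Ω, (a x * hessOfSecond v'' x).trace ≤ 0)
    (hμ : 0 < μ) (hκμ : κ < μ) (hx₀ : x₀ ∈ Gm κ v Ω) (hρ : closedBall x₀ ρ ⊆ Ω) :
    ENNReal.ofReal ((lam / Lam) ^ (n - 1)) *
        volume (ball (0 : Euc n) ((1 - κ / μ) * (ρ / 2))) ≤
      volume (Gm μ v Ω ∩ ball x₀ ρ) := by
  obtain ⟨-, p, hp⟩ := mem_Gm_iff_exists_isTouchedBelow.1 hx₀
  have hcont : ContinuousOn v' Ω := fun x hx ↦ (hv' x hx).continuousAt.continuousWithinAt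
  have hmeas : MeasurableSet (Gm μ v Ω ∩ ball x₀ ρ) :=
    (measurableSet_Gm hΩ hv hcont μ).inter measurableSet_ball
  have hball : volume (ball (0 : Euc n) ((1 - κ / μ) * (ρ / 2))) ≤
      ENNReal.ofReal ((Lam / lam) ^ (n - 1)) * volume (Gm μ v Ω ∩ ball x₀ ρ) := by
    rw [← Measure.addHaar_ball_center volume (x₀ + μ⁻¹ • p)]
    exact (measure_mono (ball_subset_image_vertexMap hΩ hv hμ hκμ hp hρ)).trans
      (volume_image_vertexMap_le hΩ hv hv' hlam ha hsuper hμ hmeas Set.inter_subset_left)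
  calc ENNReal.ofReal ((lam / Lam) ^ (n - 1)) * volume (ball (0 : Euc n) ((1 - κ / μ) * (ρ / 2)))
      ≤ ENNReal.ofReal ((lam / Lam) ^ (n - 1)) *
        (ENNReal.ofReal ((Lam / lam) ^ (n - 1)) * volume (Gm μ v Ω ∩ ball x₀ ρ)) := by gcongr
    _ = volume (Gm μ v Ω ∩ ball x₀ ρ) := by
        rw [← mul_assoc, ← ENNReal.ofReal_mul (by positivity), ← mul_pow,
          div_mul_div_cancel₀ hLam.ne', div_self hlam.ne', one_pow, ENNReal.ofReal_one, one_mul]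

end MeasureEstimate

/-- measure estimate for strong supersolutions of aⁱʲ v_ij ≤ 0,
with explicit σ₁ = 1 − (λ/Λ)^{n−1}(1/(4√n))^n. -/
theorem stmt_5 (n : ℕ) (hn : 2 ≤ n) (lam Lam : ℝ) (hlam : 0 < lam) (hLam : lam ≤ Lam)
    (Ω : Set (Euc n)) (hΩ : IsOpen Ω) (hQ : closure (cube 2 0) ⊆ Ω)
    (a : Euc n → Matrix (Fin n) (Fin n) ℝ)
    (ha : ∀ x ∈ Ω, (a x).IsSymm ∧ matLE (lam • 1) (a x) ∧ matLE (a x) (Lam • 1))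
    (v : Euc n → ℝ) (v' : Euc n → (Euc n →L[ℝ] ℝ)) (v'' : Euc n → (Euc n →L[ℝ] Euc n →L[ℝ] ℝ))
    (hv' : ∀ x ∈ Ω, HasFDerivAt v (v' x) x)
    (hv'' : ∀ x ∈ Ω, HasFDerivAt v' (v'' x) x)
    (hsuper : ∀ x ∈ Ω, (a x * hessOfSecond v'' x).trace ≤ 0)
    (hne : (Gm (1 / n) v Ω ∩ cube (1 / (4 * Real.sqrt n)) 0).Nonempty) :
    ENNReal.ofReal (1 - (1 - (lam / Lam) ^ (n - 1) * (1 / (4 * Real.sqrt n)) ^ n)) *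
        volume (cube (1 : ℝ) (0 : Euc n)) ≤
      volume (Gm 32 v Ω ∩ cube 1 0) := by
  have : NeZero n := ⟨by omega⟩
  obtain ⟨x₀, hx₀, hx₀cube⟩ := hne
  have hcube : cube (1 / (4 * √n)) (0 : Euc n) ⊆ closedBall 0 (1 / 8) :=
    cube_subset_closedBall (by field_simp; norm_num) 0
  have hdist : dist x₀ 0 ≤ 1 / 8 := hcube hx₀cube
  have hopening : (1 / n : ℝ) ≤ 1 := by simpa using Nat.cast_inv_le_one n
  have hΩball : closedBall x₀ (3 / 8) ⊆ Ω := calc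
    closedBall x₀ (3 / 8) ⊆ ball 0 (2 / 2) := closedBall_subset_ball' (by linarith)
    _ ⊆ cube 2 0 := ball_subset_cube 0 2
    _ ⊆ Ω := subset_closure.trans hQ
  calc _ = ENNReal.ofReal ((lam / Lam) ^ (n - 1)) * volume (cube (1 / (4 * √n)) (0 : Euc n)) := by
        rw [sub_sub_cancel, ENNReal.ofReal_mul' (by positivity), volume_cube, volume_cube,
          ENNReal.ofReal_one, one_pow, mul_one,
          ENNReal.ofReal_pow (p := 1 / (4 * √n)) (by positivity)]
    _ ≤ ENNReal.ofReal ((lam / Lam) ^ (n - 1)) *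
          volume (ball (0 : Euc n) ((1 - 1 / n / 32) * (3 / 8 / 2))) := by
        gcongr
        exact hcube.trans (closedBall_subset_ball (by linarith))
    _ ≤ volume (Gm 32 v Ω ∩ ball x₀ (3 / 8)) :=
        mul_volume_ball_le_volume_Gm_inter_ball hΩ hv' hv'' hlam (hlam.trans_le hLam)
          (fun x hx ↦ (ha x hx).2) hsuper (by norm_num) (by linarith) hx₀ hΩball
    _ ≤ volume (Gm 32 v Ω ∩ cube 1 0) := by
        gcongr
        exact (ball_subset_ball' (by linarith)).trans (ball_subset_cube 0 1)
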